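/- arXiv:2509.22332 — 3 statements merged into one kernel-verified Lean document; each statement's English description precedes it below -/
import Mathlib

section
/- Let G be a finite simple graph and let S be any set of vertices of G. Then the set S' := S \ N(S) is an independent set and, computing cardinalities as integers, |S'| − |N(S')| ≥ |S| − |N(S)|. -/
open Finset

/-!
By symmetry of adjacency, no vertex of `S` is adjacent to a vertex of `S' := S \ N(S)`, so `S` is
disjoint from `N(S')`. In particular `S'` is independent. Moreover the discarded vertices
`S ∩ N(S)` and the surviving neighbors `N(S')` are disjoint subsets of `N(S)`, so passing from `S`
to `S'` removes at least as many vertices from the neighborhood as from the set.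
-/

section OpenNeighborhood

variable {V : Type*} [DecidableEq V] (G : SimpleGraph V) [G.LocallyFinite] {S T : Finset V}

/-- The open neighborhood `N(S)` of a finite set `S` of vertices: all vertices adjacent to some
vertex of `S`. Local finiteness of the graph makes it a `Finset`; it may meet `S`. -/
def openNeighborhood (S : Finset V) : Finset V :=
  S.biUnion fun v => G.neighborFinset v

variable {G}

theorem mem_openNeighborhood {v : V} : v ∈ openNeighborhood G S ↔ ∃ u ∈ S, G.Adj u v := by
  simp only [openNeighborhood, mem_biUnion, SimpleGraph.mem_neighborFinset]

theorem openNeighborhood_mono (h : S ⊆ T) : openNeighborhood G S ⊆ openNeighborhood G T :=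
  biUnion_subset_biUnion_of_subset_left _ h

theorem disjoint_openNeighborhood_iff :
    Disjoint S (openNeighborhood G T) ↔ ∀ u ∈ S, ∀ v ∈ T, ¬ G.Adj u v := by
  simp only [disjoint_left, mem_openNeighborhood, not_exists, not_and, G.adj_comm]

theorem disjoint_openNeighborhood_comm :
    Disjoint S (openNeighborhood G T) ↔ Disjoint T (openNeighborhood G S) := by
  simp only [disjoint_openNeighborhood_iff]
  exact ⟨fun h v hv u hu huv => h u hu v hv huv.symm, fun h u hu v hv huv => h v hv u hu huv.symm⟩

variable (G S)

theorem disjoint_openNeighborhood_sdiff_openNeighborhood :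
    Disjoint S (openNeighborhood G (S \ openNeighborhood G S)) :=
  disjoint_openNeighborhood_comm.2 sdiff_disjoint

theorem card_inter_openNeighborhood_add_card_le :
    #(S ∩ openNeighborhood G S) + #(openNeighborhood G (S \ openNeighborhood G S)) ≤
      #(openNeighborhood G S) := by
  have hdisj : Disjoint (S ∩ openNeighborhood G S)
      (openNeighborhood G (S \ openNeighborhood G S)) :=
    (disjoint_openNeighborhood_sdiff_openNeighborhood G S).mono_left inter_subset_left
  rw [← card_union_of_disjoint hdisj]
  exact card_le_card (union_subset inter_subset_right (openNeighborhood_mono sdiff_subset))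

end OpenNeighborhood

theorem stmt1_general {V : Type*} [DecidableEq V] (G : SimpleGraph V) [G.LocallyFinite]
    (S : Finset V) :
    let S' := S \ openNeighborhood G S
    (∀ u ∈ S', ∀ v ∈ S', ¬ G.Adj u v) ∧
      (#S : ℤ) - #(openNeighborhood G S) ≤ (#S' : ℤ) - #(openNeighborhood G S') := by
  intro S'
  have hdisj : Disjoint S' (openNeighborhood G S') :=
    (disjoint_openNeighborhood_sdiff_openNeighborhood G S).mono_left sdiff_subset
  have hsplit : #S' + #(S ∩ openNeighborhood G S) = #S := card_sdiff_add_card_inter S _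
  have hle : #(S ∩ openNeighborhood G S) + #(openNeighborhood G S') ≤ #(openNeighborhood G S) :=
    card_inter_openNeighborhood_add_card_le G S
  exact ⟨disjoint_openNeighborhood_iff.1 hdisj, by omega⟩

/-- For any set `S` of vertices of a finite simple graph `G`, the set
`S' := S \ N(S)` is independent and `|S'| − |N(S')| ≥ |S| − |N(S)|` as integers. -/
theorem stmt1 {V : Type*} [Fintype V] [DecidableEq V]
    (G : SimpleGraph V) [DecidableRel G.Adj] (S : Finset V) :
    let N : Finset V → Finset V := fun T => T.biUnion (fun s => G.neighborFinset s)
    let S' := S \ N S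
    (∀ u ∈ S', ∀ v ∈ S', ¬ G.Adj u v) ∧
      (S.card : ℤ) - ((N S).card : ℤ) ≤ (S'.card : ℤ) - ((N S').card : ℤ) :=
  stmt1_general G S
end

section
/- Let G be a finite simple graph. Then the maximum of |S| − |N(S)| (as an integer) taken over all subsets S of V(G) equals the maximum of |S| − |N(S)| taken over all independent subsets S of V(G); both maxima range over all subsets including the empty set. -/
open Finset

/-! Passing from `S` to `S \ N(S)` keeps exactly the vertices of `S` without a neighbor in `S`, so
the result is independent. No vertex of `S` is adjacent to a vertex that was kept, so `N(S)` loses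
at least `N(S) ∩ S`, which is precisely the set removed from `S`: the difference `|S| − |N(S)|`
does not decrease. -/

lemma isIndepSet_iff_forall_not_adj {V : Type*} {G : SimpleGraph V} {s : Set V} :
    G.IsIndepSet s ↔ ∀ u ∈ s, ∀ v ∈ s, ¬ G.Adj u v :=
  haveI : Std.Refl fun u v => ¬ G.Adj u v := ⟨fun _ => G.irrefl⟩
  Set.pairwise_iff_of_refl

section Neighborhood

variable {V : Type*} [DecidableEq V] (G : SimpleGraph V) [G.LocallyFinite]

/-- The open neighborhood `N(S)` of a finite set `S` of vertices in a locally finite graph: all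
vertices adjacent to at least one vertex of `S`, including those that lie in `S` themselves. -/
def openNeighborFinset (S : Finset V) : Finset V :=
  S.biUnion fun s => G.neighborFinset s

/-- The difference `|S| − |N(S)|` of a finite set `S` of vertices, the quantity to be maximized.
It is an integer because it may be negative. -/
def neighborDifference (S : Finset V) : ℤ :=
  #S - #(openNeighborFinset G S)

variable {G}

lemma mem_openNeighborFinset {S : Finset V} {v : V} :
    v ∈ openNeighborFinset G S ↔ ∃ u ∈ S, G.Adj u v := by
  simp only [openNeighborFinset, mem_biUnion, SimpleGraph.mem_neighborFinset]

variable (G)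

lemma isIndepSet_sdiff_openNeighborFinset (S : Finset V) :
    G.IsIndepSet ↑(S \ openNeighborFinset G S) := by
  intro u hu v hv _ huv
  have huS := (mem_sdiff.1 hu).1
  have hvN := (mem_sdiff.1 hv).2
  exact hvN (mem_openNeighborFinset.2 ⟨u, huS, huv⟩)

lemma openNeighborFinset_sdiff_openNeighborFinset_subset (S : Finset V) :
    openNeighborFinset G (S \ openNeighborFinset G S) ⊆ openNeighborFinset G S \ S := by
  intro v hv
  obtain ⟨u, hu, huv⟩ := mem_openNeighborFinset.1 hv
  obtain ⟨huS, huN⟩ := mem_sdiff.1 hu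
  refine mem_sdiff.2 ⟨mem_openNeighborFinset.2 ⟨u, huS, huv⟩, fun hvS => huN ?_⟩
  exact mem_openNeighborFinset.2 ⟨v, hvS, huv.symm⟩

lemma neighborDifference_le_neighborDifference_sdiff (S : Finset V) :
    neighborDifference G S ≤ neighborDifference G (S \ openNeighborFinset G S) := by
  set N := openNeighborFinset G S with hN
  have card_neighbors_le : #(openNeighborFinset G (S \ N)) ≤ #(N \ S) :=
    card_le_card (openNeighborFinset_sdiff_openNeighborFinset_subset G S)
  have card_sdiff_add : #(S \ N) + #N = #(N \ S) + #S := by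
    rw [card_sdiff_add_card, card_sdiff_add_card, union_comm]
  simp only [neighborDifference, ← hN]
  lia

theorem stmt2_general [DecidableRel G.Adj] (U : Finset V) :
    U.powerset.sup' ⟨∅, empty_mem_powerset U⟩ (neighborDifference G) =
      (U.powerset.filter fun S : Finset V => G.IsIndepSet S).sup' ⟨∅, by simp⟩
        (neighborDifference G) := by
  apply le_antisymm
  · refine sup'_le _ _ fun S hS => ?_
    have sdiff_mem : S \ openNeighborFinset G S ∈ U.powerset :=
      mem_powerset.2 (sdiff_subset.trans (mem_powerset.1 hS))
    exact (neighborDifference_le_neighborDifference_sdiff G S).trans <|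
      le_sup' _ (mem_filter.2 ⟨sdiff_mem, isIndepSet_sdiff_openNeighborFinset G S⟩)
  · exact sup'_mono _ (filter_subset _ _) _

end Neighborhood

/-- The maximum of `|S| − |N(S)|` (as an integer) over all subsets `S` of the
vertex set equals the maximum over all independent subsets `S` (both ranges include `∅`). -/
theorem stmt2 {V : Type*} [Fintype V] [DecidableEq V]
    (G : SimpleGraph V) [DecidableRel G.Adj] :
    (Finset.univ : Finset V).powerset.sup'
        ⟨∅, by simp⟩
        (fun T => (T.card : ℤ) - ((T.biUnion (fun s => G.neighborFinset s)).card : ℤ)) =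
      ((Finset.univ : Finset V).powerset.filter
          (fun T => ∀ u ∈ T, ∀ v ∈ T, ¬ G.Adj u v)).sup'
        ⟨∅, by simp⟩
        (fun T => (T.card : ℤ) - ((T.biUnion (fun s => G.neighborFinset s)).card : ℤ)) := by
  simpa only [isIndepSet_iff_forall_not_adj, mem_coe] using! stmt2_general G univ
end

section
/- Let P be a finite simple graph and let S be an independent set of non-isolated vertices of P such that |S| − |N(S)| ≥ |S'| − |N(S')| (as integers) for every independent set S' of non-isolated vertices of P. Then there exists an injective function f : N(S) → S such that every vertex v ∈ N(S) is adjacent to f(v); in other words, there is a matching in P, using only edges between N(S) and S, that covers all vertices of N(S). -/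
open Finset

/-!
The matching comes from Hall's theorem, applied to the family that sends `v ∈ N(S)` to the set of
its neighbours in `S`. Given `T ⊆ N(S)`, let `A` be the set of elements of `S` with a neighbour in
`T`. Deleting `A` from `S` removes all of `T` from the neighbourhood, so it raises `|S| − |N(S)|`
by at least `|T| − |A|`; since `S` is a maximizer, `|T| ≤ |A|`, which is Hall's condition.
-/

section SetFamily

variable {α β : Type*} [DecidableEq β] {t : α → Finset β} {S : Finset α}

theorem biUnion_filter_disjoint_subset_sdiff (t : α → Finset β) (S : Finset α) (T : Finset β) :
    {a ∈ S | Disjoint (t a) T}.biUnion t ⊆ S.biUnion t \ T := by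
  refine biUnion_subset.2 fun a ha => ?_
  obtain ⟨haS, haT⟩ := mem_filter.1 ha
  exact subset_sdiff.2 ⟨subset_biUnion_of_mem t haS, haT⟩

theorem card_le_card_filter_not_disjoint_of_forall_subset
    (hMax : ∀ S' ⊆ S, (#S' : ℤ) - #(S'.biUnion t) ≤ #S - #(S.biUnion t))
    {T : Finset β} (hT : T ⊆ S.biUnion t) :
    #T ≤ #{a ∈ S | ¬Disjoint (t a) T} := by
  have hDelete := hMax {a ∈ S | Disjoint (t a) T} (filter_subset _ _)
  have hImage := card_le_card (biUnion_filter_disjoint_subset_sdiff t S T)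
  have hCardImage := card_sdiff_add_card_eq_card hT
  have hCard := card_filter_add_card_filter_not (s := S) fun a => Disjoint (t a) T
  lia

theorem biUnion_filter_mem_eq_filter_not_disjoint [DecidableEq α] (t : α → Finset β)
    (S : Finset α) (T : Finset β) :
    T.biUnion (fun b => {a ∈ S | b ∈ t a}) = {a ∈ S | ¬Disjoint (t a) T} := by
  ext a
  simp only [mem_biUnion, mem_filter, not_disjoint_iff]
  tauto

theorem exists_injective_forall_mem_of_forall_subset
    (hMax : ∀ S' ⊆ S, (#S' : ℤ) - #(S'.biUnion t) ≤ #S - #(S.biUnion t)) :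
    ∃ f : S.biUnion t → α, Function.Injective f ∧ ∀ b, f b ∈ S ∧ ↑b ∈ t (f b) := by
  classical
  have hHall (T : Finset (S.biUnion t)) :
      #T ≤ #(T.biUnion fun b => {a ∈ S | ↑b ∈ t a}) := by
    calc #T = #(T.map (.subtype _)) := (card_map _).symm
      _ ≤ #{a ∈ S | ¬Disjoint (t a) (T.map (.subtype _))} :=
        card_le_card_filter_not_disjoint_of_forall_subset hMax (map_subtype_subset T)
      _ = #(T.biUnion fun b => {a ∈ S | ↑b ∈ t a}) := by
        rw [← biUnion_filter_mem_eq_filter_not_disjoint, map_eq_image, image_biUnion]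
        rfl
  obtain ⟨f, hfInj, hf⟩ := (all_card_le_biUnion_card_iff_exists_injective _).1 hHall
  exact ⟨f, hfInj, fun b => mem_filter.1 (hf b)⟩

end SetFamily

theorem stmt4_general {V : Type*} [DecidableEq V] (P : SimpleGraph V) [P.LocallyFinite]
    (S : Finset V)
    (hMax : ∀ S' ⊆ S,
      (#S' : ℤ) - #(S'.biUnion fun s => P.neighborFinset s) ≤
        #S - #(S.biUnion fun s => P.neighborFinset s)) :
    ∃ f : V → V,
      (∀ v ∈ S.biUnion (fun s => P.neighborFinset s), f v ∈ S ∧ P.Adj v (f v)) ∧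
      (∀ u ∈ S.biUnion (fun s => P.neighborFinset s),
        ∀ v ∈ S.biUnion (fun s => P.neighborFinset s), f u = f v → u = v) := by
  obtain ⟨g, hgInj, hg⟩ := exists_injective_forall_mem_of_forall_subset hMax
  let f : V → V := Function.extend Subtype.val g id
  have hfg {v : V} (hv : v ∈ S.biUnion fun s => P.neighborFinset s) : f v = g ⟨v, hv⟩ :=
    Subtype.val_injective.extend_apply g id ⟨v, hv⟩
  refine ⟨f, fun v hv => ?_, fun u hu v hv huv => ?_⟩
  · obtain ⟨hS, hAdj⟩ := hg ⟨v, hv⟩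
    rw [hfg hv]
    exact ⟨hS, ((P.mem_neighborFinset _ _).1 hAdj).symm⟩
  · rw [hfg hu, hfg hv] at huv
    exact congrArg Subtype.val (hgInj huv)

/-- If `S` is an independent set of non-isolated vertices maximizing
`|S| − |N(S)|` among all such sets, then there is a matching of `N(S)` into `S`:
an injective map `f : N(S) → S` with every `v ∈ N(S)` adjacent to `f v`. -/
theorem stmt4 {V : Type*} [Fintype V] [DecidableEq V]
    (P : SimpleGraph V) [DecidableRel P.Adj] (S : Finset V)
    (hInd : ∀ u ∈ S, ∀ v ∈ S, ¬ P.Adj u v)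
    (hNonIso : ∀ v ∈ S, ∃ w, P.Adj v w)
    (hMax : ∀ S' : Finset V, (∀ u ∈ S', ∀ v ∈ S', ¬ P.Adj u v) →
      (∀ v ∈ S', ∃ w, P.Adj v w) →
      (S'.card : ℤ) - ((S'.biUnion (fun s => P.neighborFinset s)).card : ℤ) ≤
        (S.card : ℤ) - ((S.biUnion (fun s => P.neighborFinset s)).card : ℤ)) :
    ∃ f : V → V,
      (∀ v ∈ S.biUnion (fun s => P.neighborFinset s), f v ∈ S ∧ P.Adj v (f v)) ∧
      (∀ u ∈ S.biUnion (fun s => P.neighborFinset s),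
        ∀ v ∈ S.biUnion (fun s => P.neighborFinset s), f u = f v → u = v) :=
  stmt4_general P S fun S' hS' => hMax S' (fun u hu v hv => hInd u (hS' hu) v (hS' hv))
    fun v hv => hNonIso v (hS' hv)
end
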